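/- arXiv:2501.03982 — 2 statements merged into one kernel-verified Lean document; each statement's English description precedes it below -/
import Mathlib

section
/- Let (Ω, 𝒜, P) be a probability space and T, T_n : Ω → ℝ measurable. Set F := σ(T) and F_n := σ(T_n), and assume F_n ⊆ F. Let φ = f ∘ T for a non-decreasing measurable f : ℝ → [0,1]. Assume T is stochastically non-decreasing in T_n under P: there is a version κ of the regular conditional distribution of T given T_n (a Markov kernel κ from ℝ to ℝ that is a version of condDistrib T T_n P) such that for all t ≤ t' and all s ∈ ℝ, κ(t)([s,∞)) ≤ κ(t')([s,∞)). Then there exists a non-decreasing measurable h : ℝ → [0,1] such that E_P[φ | F_n] = h ∘ T_n P-almost surely; that is, the conditional expectation of φ given F_n is a non-decreasing function of T_n. -/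
/-!
The function `h t = ∫ f dκ(t)` works. It represents the conditional expectation because `κ` agrees
with `condDistrib T Tn P` for almost every value of `Tn`. Monotonicity is the usual integral
characterisation of the stochastic order: domination on the half-lines `[s, ∞)` extends to every
upper set of `ℝ` (`measure_le_of_isUpperSet`), in particular to the superlevel sets of a
non-decreasing `f`, and the layer cake formula integrates this over the levels
(`integral_le_of_forall_measure_Ici_le`).
-/

open MeasureTheory ProbabilityTheory Filter Set
open scoped ENNReal NNReal

/-- Domination on closed half-lines extends to all upper sets: an upper set without a least element
is the directed union of the half-lines `[q, ∞)` over its rational points `q`. -/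
lemma measure_le_of_isUpperSet {μ ν : Measure ℝ} (h : ∀ s : ℝ, μ (Set.Ici s) ≤ ν (Set.Ici s))
    {U : Set ℝ} (hU : IsUpperSet U) : μ U ≤ ν U := by
  by_cases hleast : ∃ a, IsLeast U a
  · obtain ⟨a, ha, hlb⟩ := hleast
    have hUa : U = Set.Ici a := Set.Subset.antisymm (fun x hx => hlb hx) (fun x hx => hU hx ha)
    rw [hUa]
    exact h a
  · have hUnion : U = ⋃ q : {q : ℚ // (q : ℝ) ∈ U}, Set.Ici ((q : ℚ) : ℝ) := by
      refine Set.Subset.antisymm (fun x hx => ?_)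
        (Set.iUnion_subset fun q x hx => hU hx q.2)
      obtain ⟨y, hy, hyx⟩ : ∃ y ∈ U, y < x := by
        by_contra! hx_min
        exact hleast ⟨x, hx, hx_min⟩
      obtain ⟨q, hyq, hqx⟩ := exists_rat_btwn hyx
      exact Set.mem_iUnion.2 ⟨⟨q, hU hyq.le hy⟩, hqx.le⟩
    have hdir : Directed (· ⊆ ·)
        (fun q : {q : ℚ // (q : ℝ) ∈ U} => Set.Ici ((q : ℚ) : ℝ)) := by
      intro p q
      rcases le_total (p : ℚ) (q : ℚ) with hpq | hqp
      · exact ⟨p, subset_rfl, Set.Ici_subset_Ici.2 (by exact_mod_cast hpq)⟩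
      · exact ⟨q, Set.Ici_subset_Ici.2 (by exact_mod_cast hqp), subset_rfl⟩
    rw [hUnion, hdir.measure_iUnion, hdir.measure_iUnion]
    exact iSup_mono fun q => h q

lemma integral_le_of_forall_measure_Ici_le {μ ν : Measure ℝ} [IsFiniteMeasure ν]
    (h : ∀ s : ℝ, μ (Set.Ici s) ≤ ν (Set.Ici s)) {f : ℝ → ℝ} (hf : Monotone f)
    (hf_range : ∀ x, f x ∈ Set.Icc (0 : ℝ) 1) : ∫ x, f x ∂μ ≤ ∫ x, f x ∂ν := by
  have hnn : ∀ x, 0 ≤ f x := fun x => (hf_range x).1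
  have hint : Integrable f ν := Integrable.of_mem_Icc 0 1 hf.measurable.aemeasurable
    (Eventually.of_forall hf_range)
  rw [integral_eq_lintegral_of_nonneg_ae (Eventually.of_forall hnn)
      hf.measurable.aestronglyMeasurable,
    integral_eq_lintegral_of_nonneg_ae (Eventually.of_forall hnn)
      hf.measurable.aestronglyMeasurable]
  refine ENNReal.toReal_mono hint.lintegral_lt_top.ne ?_
  rw [lintegral_eq_lintegral_meas_le μ (Eventually.of_forall hnn) hf.measurable.aemeasurable,
    lintegral_eq_lintegral_meas_le ν (Eventually.of_forall hnn) hf.measurable.aemeasurable]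
  exact lintegral_mono fun t => measure_le_of_isUpperSet h
    fun x y hxy (hx : t ≤ f x) => hx.trans (hf hxy)

/-- let `T, Tn : Ω → ℝ` be measurable with `σ(Tn) ⊆ σ(T)`, let
`φ = f ∘ T` for a non-decreasing measurable `f : ℝ → [0,1]`, and suppose `T` is
stochastically non-decreasing in `Tn` under `P`: some Markov-kernel version `κ` of the
regular conditional distribution of `T` given `Tn` satisfies
`κ t [s,∞) ≤ κ t' [s,∞)` whenever `t ≤ t'`. Then `E_P[φ | σ(Tn)]` is (a.s.) a
non-decreasing measurable function of `Tn`. -/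
theorem condexp_monotone_of_stochastically_monotone
    {Ω : Type*} {mΩ : MeasurableSpace Ω} (P : Measure Ω) [IsProbabilityMeasure P]
    (T Tn : Ω → ℝ) (hT : Measurable T) (hTn : Measurable Tn)
    (hsub : MeasurableSpace.comap Tn (inferInstance : MeasurableSpace ℝ) ≤
      MeasurableSpace.comap T (inferInstance : MeasurableSpace ℝ))
    (f : ℝ → ℝ) (hf_mono : Monotone f) (hf_meas : Measurable f)
    (hf_range : ∀ x, f x ∈ Set.Icc (0 : ℝ) 1)
    (κ : ProbabilityTheory.Kernel ℝ ℝ) [IsMarkovKernel κ]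
    (hκ_version : ∀ᵐ t ∂(P.map Tn), κ t = ProbabilityTheory.condDistrib T Tn P t)
    (hκ_mono : ∀ t t' : ℝ, t ≤ t' → ∀ s : ℝ, κ t (Set.Ici s) ≤ κ t' (Set.Ici s)) :
    ∃ h : ℝ → ℝ, Monotone h ∧ Measurable h ∧ (∀ x, h x ∈ Set.Icc (0 : ℝ) 1) ∧
      P[fun ω => f (T ω) | MeasurableSpace.comap Tn (inferInstance : MeasurableSpace ℝ)]
        =ᵐ[P] fun ω => h (Tn ω) := by
  have hint : ∀ (μ : Measure ℝ) [IsProbabilityMeasure μ], Integrable f μ := fun μ _ =>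
    Integrable.of_mem_Icc 0 1 hf_meas.aemeasurable (Eventually.of_forall hf_range)
  refine ⟨fun t => ∫ x, f x ∂κ t,
    fun t t' htt' => integral_le_of_forall_measure_Ici_le (hκ_mono t t' htt') hf_mono hf_range,
    (hf_meas.stronglyMeasurable.integral_kernel (κ := κ)).measurable,
    fun t => ⟨integral_nonneg fun x => (hf_range x).1, ?_⟩, ?_⟩
  · calc ∫ x, f x ∂κ t ≤ ∫ _, (1 : ℝ) ∂κ t :=
          integral_mono (hint _) (integrable_const _) fun x => (hf_range x).2
      _ = 1 := by simp
  · have hfT : Integrable (fun ω => f (T ω)) P :=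
      Integrable.of_mem_Icc 0 1 (hf_meas.comp hT).aemeasurable
        (Eventually.of_forall fun ω => hf_range (T ω))
    filter_upwards [condExp_ae_eq_integral_condDistrib hTn hT.aemeasurable
      hf_meas.stronglyMeasurable hfT, ae_of_ae_map hTn.aemeasurable hκ_version] with ω hω hκω
    rw [hω, hκω]
end

section
/- Let P and Q be probability measures on a measurable space (Ω, F) with Q absolutely continuous with respect to P, let ε := dQ/dP be the Radon–Nikodym derivative, and let G ⊆ F be a sub-σ-algebra. Then E_P[ε | G] is P-almost surely equal to the Radon–Nikodym derivative of the restriction (trim) of Q to G with respect to the restriction of P to G. Consequently, if ε maximizes ∫ log ε' dQ over all nonnegative F-measurable ε' with ∫ ε' dP ≤ 1 (i.e., ε is the log-utility-optimal e-value for P against Q), then E_P[ε | G] maximizes ∫ log ε' dQ over all nonnegative G-measurable ε' with ∫ ε' dP ≤ 1 (i.e., it is log-utility-optimal for the restrictions of P and Q to G). -/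
/-!
The first assertion is Mathlib's `toReal_rnDeriv_trim`. The second one holds because the likelihood
ratio `ε = dQ/dP` of *any* pair of probability measures `Q ≪ P` is log-optimal
(`isLogOptimal_of_ae_eq_rnDeriv`); by the first assertion this applies to the restrictions of `P`
and `Q` to `G`.

Optimality of the likelihood ratio is Gibbs' inequality. For a competitor `y`, the bound
`log (y / ε) ≤ y / ε - 1` rearranges to an inequality between nonnegative quantities
(`log_gibbs`), `(log y)⁺ + (log ε)⁻ + 1 ≤ (log ε)⁺ + y / ε + (log y)⁻`, which can be integrated
against `Q` without any integrability assumption. Since `∫ y / ε dQ ≤ ∫ y dP ≤ 1`, the constants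
cancel. Finally `(log ε)⁻ ≤ 1 / ε` gives `∫ (log ε)⁻ dQ ≤ 1`, so the inequality can be rearranged
into one between the differences that define `logWealth`.
-/

open MeasureTheory Filter Set
open scoped ENNReal NNReal

/-- The positive part of an extended real, as an extended nonnegative real. -/
noncomputable def erealPos (x : EReal) : ℝ≥0∞ :=
  if x = ⊤ then ⊤ else ENNReal.ofReal x.toReal

/-- The extended-real valued integral `∫ log f dν` of the logarithm of a nonnegative
function `f`, defined as the difference of the integrals of the positive and negative
parts of `log f` (with `log 0 = ⊥` and `log ∞ = ⊤`). -/
noncomputable def logWealth {Ω : Type*} (mΩ : MeasurableSpace Ω) (ν : @Measure Ω mΩ)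
    (f : Ω → ℝ≥0∞) : EReal :=
  ((∫⁻ ω, erealPos (ENNReal.log (f ω)) ∂ν : ℝ≥0∞) : EReal) -
    ((∫⁻ ω, erealPos (-(ENNReal.log (f ω))) ∂ν : ℝ≥0∞) : EReal)

/-- `ε` is a log-utility-optimal e-value for `P` against `Q`: it is a nonnegative measurable
function with `∫ ε dP ≤ 1` maximizing `∫ log ε' dQ` among all such functions. -/
def IsLogOptimal {Ω : Type*} (mΩ : MeasurableSpace Ω) (P Q : @Measure Ω mΩ)
    (ε : Ω → ℝ≥0∞) : Prop :=
  @Measurable Ω ℝ≥0∞ mΩ _ ε ∧ (∫⁻ ω, ε ω ∂P) ≤ 1 ∧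
    ∀ ε' : Ω → ℝ≥0∞, @Measurable Ω ℝ≥0∞ mΩ _ ε' → (∫⁻ ω, ε' ω ∂P) ≤ 1 →
      logWealth mΩ Q ε' ≤ logWealth mΩ Q ε

lemma measurable_erealPos : Measurable erealPos := measurable_ereal_toENNReal

lemma erealPos_coe (r : ℝ) : erealPos (r : EReal) = ENNReal.ofReal r := by
  simp [erealPos]

lemma erealPos_log_le (x : ℝ≥0∞) : erealPos (ENNReal.log x) ≤ x := by
  rcases eq_or_ne x 0 with rfl | h0
  · simp [erealPos]
  rcases eq_or_ne x ⊤ with rfl | ht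
  · simp
  rw [ENNReal.log_pos_real h0 ht, erealPos_coe]
  exact ENNReal.ofReal_le_of_le_toReal (Real.log_le_self ENNReal.toReal_nonneg)

/-- The inequality `log (y / x) ≤ y / x - 1`, rearranged so that only nonnegative terms occur;
`y = 0` and `y = ∞` are allowed. -/
lemma log_gibbs {x : ℝ≥0∞} (hx0 : x ≠ 0) (hxt : x ≠ ⊤) (y : ℝ≥0∞) :
    erealPos (ENNReal.log y) + erealPos (-ENNReal.log x) + 1 ≤
      erealPos (ENNReal.log x) + y / x + erealPos (-ENNReal.log y) := by
  rcases eq_or_ne y 0 with rfl | h0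
  · simp [erealPos]
  rcases eq_or_ne y ⊤ with rfl | ht
  · simp [ENNReal.top_div_of_ne_top hxt]
  have hx : 0 < x.toReal := ENNReal.toReal_pos hx0 hxt
  have hy : 0 < y.toReal := ENNReal.toReal_pos h0 ht
  have hdiv : y / x = ENNReal.ofReal (y.toReal / x.toReal) := by
    rw [ENNReal.ofReal_div_of_pos hx, ENNReal.ofReal_toReal ht, ENNReal.ofReal_toReal hxt]
  have hlog : Real.log y.toReal - Real.log x.toReal ≤ y.toReal / x.toReal - 1 := by
    rw [← Real.log_div hy.ne' hx.ne']
    exact Real.log_le_sub_one_of_pos (div_pos hy hx)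
  rw [ENNReal.log_pos_real h0 ht, ENNReal.log_pos_real hx0 hxt, hdiv, ← EReal.coe_neg,
    ← EReal.coe_neg]
  simp only [erealPos_coe]
  generalize Real.log y.toReal = b at *
  generalize Real.log x.toReal = a at *
  have hr : 0 ≤ y.toReal / x.toReal := (div_pos hy hx).le
  generalize y.toReal / x.toReal = r at *
  -- Pass to truncated reals `max t 0`, where the two sides differ by `r - 1 - (b - a)`.
  have hof (t : ℝ) : ENNReal.ofReal t = ENNReal.ofReal (max t 0) := by simp
  rw [hof b, hof (-a), hof a, hof (-b), ← ENNReal.ofReal_one,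
    ← ENNReal.ofReal_add (by positivity) (by positivity),
    ← ENNReal.ofReal_add (by positivity) (by positivity),
    ← ENNReal.ofReal_add (by positivity) (by positivity),
    ← ENNReal.ofReal_add (by positivity) (by positivity)]
  refine ENNReal.ofReal_le_ofReal ?_
  have ha := max_zero_sub_eq_self a
  have hb := max_zero_sub_eq_self b
  linarith

/-- The difference of the two sides is the integral of `y` over `{dQ/dP = 0}`, because
`dQ/dP * (y / (dQ/dP)) = y` wherever `dQ/dP` is positive and finite. -/
lemma lintegral_div_rnDeriv_le {Ω : Type*} {m : MeasurableSpace Ω} (P Q : Measure Ω)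
    [IsProbabilityMeasure P] [IsProbabilityMeasure Q] (hQP : Q ≪ P) {y : Ω → ℝ≥0∞}
    (hy : Measurable y) : ∫⁻ ω, y ω / Q.rnDeriv P ω ∂Q ≤ ∫⁻ ω, y ω ∂P := by
  rw [← lintegral_rnDeriv_mul hQP (f := fun ω => y ω / Q.rnDeriv P ω)
    (hy.div (Measure.measurable_rnDeriv Q P)).aemeasurable]
  exact lintegral_mono fun ω => ENNReal.mul_div_le

lemma logWealth_congr {Ω : Type*} {m : MeasurableSpace Ω} {Q : Measure Ω} {f g : Ω → ℝ≥0∞}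
    (h : f =ᵐ[Q] g) : logWealth m Q f = logWealth m Q g := by
  have hpos : ∫⁻ ω, erealPos (ENNReal.log (f ω)) ∂Q = ∫⁻ ω, erealPos (ENNReal.log (g ω)) ∂Q :=
    lintegral_congr_ae (h.fun_comp fun x => erealPos (ENNReal.log x))
  have hneg : ∫⁻ ω, erealPos (-ENNReal.log (f ω)) ∂Q = ∫⁻ ω, erealPos (-ENNReal.log (g ω)) ∂Q :=
    lintegral_congr_ae (h.fun_comp fun x => erealPos (-ENNReal.log x))
  rw [logWealth, logWealth, hpos, hneg]

/-- With `EReal` subtraction, `∞ - ∞ = -∞`, so only the second negative part has to be finite. -/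
lemma ereal_sub_le_sub {a b c d : ℝ≥0∞} (hd : d ≠ ⊤) (h : a + d ≤ c + b) :
    (a : EReal) - b ≤ (c : EReal) - d := by
  rcases eq_or_ne b ⊤ with rfl | hb
  · simp
  rcases eq_or_ne c ⊤ with rfl | hc
  · lift d to ℝ≥0 using hd
    rw [EReal.coe_ennreal_top, show ((⊤ : EReal) - ((d : ℝ≥0∞) : EReal)) = ⊤ from
      EReal.top_sub_coe (d : ℝ)]
    exact le_top
  have ha : a ≠ ⊤ := ne_top_of_le_ne_top (ENNReal.add_ne_top.2 ⟨hc, hb⟩) (le_self_add.trans h)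
  lift a to ℝ≥0 using ha
  lift b to ℝ≥0 using hb
  lift c to ℝ≥0 using hc
  lift d to ℝ≥0 using hd
  have h' : (a : ℝ) + d ≤ c + b := by exact_mod_cast h
  change ((a : ℝ) : EReal) - ((b : ℝ) : EReal) ≤ ((c : ℝ) : EReal) - ((d : ℝ) : EReal)
  rw [← EReal.coe_sub, ← EReal.coe_sub, EReal.coe_le_coe_iff]
  linarith

lemma logWealth_le_rnDeriv {Ω : Type*} {m : MeasurableSpace Ω} (P Q : Measure Ω)
    [IsProbabilityMeasure P] [IsProbabilityMeasure Q] (hQP : Q ≪ P) {y : Ω → ℝ≥0∞}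
    (hy : Measurable y) (hy1 : ∫⁻ ω, y ω ∂P ≤ 1) :
    logWealth m Q y ≤ logWealth m Q (Q.rnDeriv P) := by
  have hε := Measure.measurable_rnDeriv Q P
  have hpos {f : Ω → ℝ≥0∞} (hf : Measurable f) :
      Measurable fun ω => erealPos (ENNReal.log (f ω)) :=
    measurable_erealPos.comp (ENNReal.measurable_log.comp hf)
  have hneg {f : Ω → ℝ≥0∞} (hf : Measurable f) :
      Measurable fun ω => erealPos (-ENNReal.log (f ω)) := by
    simpa only [Pi.inv_apply, ENNReal.log_inv] using hpos hf.inv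
  refine ereal_sub_le_sub ?_ ?_
  · refine ne_top_of_le_ne_top ENNReal.one_ne_top ?_
    calc ∫⁻ ω, erealPos (-ENNReal.log (Q.rnDeriv P ω)) ∂Q
        ≤ ∫⁻ ω, 1 / Q.rnDeriv P ω ∂Q := lintegral_mono fun ω => by
          rw [← ENNReal.log_inv, one_div]
          exact erealPos_log_le _
      _ ≤ ∫⁻ _, 1 ∂P := lintegral_div_rnDeriv_le P Q hQP measurable_const
      _ = 1 := by simp
  · have key : ∫⁻ ω, (erealPos (ENNReal.log (y ω)) + erealPos (-ENNReal.log (Q.rnDeriv P ω)) + 1) ∂Q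
        ≤ ∫⁻ ω, (erealPos (ENNReal.log (Q.rnDeriv P ω)) + y ω / Q.rnDeriv P ω
          + erealPos (-ENNReal.log (y ω))) ∂Q := by
      refine lintegral_mono_ae ?_
      filter_upwards [Measure.rnDeriv_pos hQP, hQP.ae_le (Measure.rnDeriv_ne_top Q P)]
        with ω h0 ht
      exact log_gibbs h0.ne' ht _
    rw [lintegral_add_right _ measurable_const, lintegral_add_right _ (hneg hε),
      lintegral_add_right _ (hneg hy), lintegral_add_left (hpos hε), lintegral_const,
      measure_univ, mul_one, add_right_comm (∫⁻ ω, erealPos (ENNReal.log (Q.rnDeriv P ω)) ∂Q)] at key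
    exact (ENNReal.add_le_add_iff_right ENNReal.one_ne_top).1 <|
      key.trans <| by gcongr; exact (lintegral_div_rnDeriv_le P Q hQP hy).trans hy1

/-- The likelihood ratio is log-optimal, for any measurable version of it. -/
lemma isLogOptimal_of_ae_eq_rnDeriv {Ω : Type*} {m : MeasurableSpace Ω} (P Q : Measure Ω)
    [IsProbabilityMeasure P] [IsProbabilityMeasure Q] (hQP : Q ≪ P) {e : Ω → ℝ≥0∞}
    (he : Measurable e) (h : e =ᵐ[P] Q.rnDeriv P) : IsLogOptimal m P Q e := by
  refine ⟨he, ?_, fun y hy hy1 => ?_⟩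
  · rw [lintegral_congr_ae h, Measure.lintegral_rnDeriv hQP, measure_univ]
  · rw [logWealth_congr (hQP.ae_le h)]
    exact logWealth_le_rnDeriv P Q hQP hy hy1

/-- for `Q ≪ P` and a sub-σ-algebra `G`, the conditional expectation
`E_P[dQ/dP | G]` is `P`-a.s. the Radon–Nikodym derivative of `Q.trim` with respect to
`P.trim` on `G`; consequently, if `dQ/dP` is the log-utility-optimal e-value for `P` against
`Q`, then `E_P[dQ/dP | G]` is log-utility-optimal for the restrictions of `P` and `Q` to `G`. -/
theorem condexp_rnDeriv_eq_trim_rnDeriv_and_logOptimal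
    {Ω : Type*} {m : MeasurableSpace Ω} (P Q : Measure Ω)
    [IsProbabilityMeasure P] [IsProbabilityMeasure Q]
    (hQP : Q ≪ P)
    (G : MeasurableSpace Ω) (hG : G ≤ m) :
    (P[fun ω => (Q.rnDeriv P ω).toReal | G] =ᵐ[P]
      fun ω => ((Q.trim hG).rnDeriv (P.trim hG) ω).toReal) ∧
    (IsLogOptimal m P Q (Q.rnDeriv P) →
      IsLogOptimal G (P.trim hG) (Q.trim hG)
        (fun ω => ENNReal.ofReal ((P[fun ω' => (Q.rnDeriv P ω').toReal | G]) ω))) := by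
  have htrim := toReal_rnDeriv_trim hG hQP
  refine ⟨(ae_eq_of_ae_eq_trim htrim).symm, fun _ => ?_⟩
  have : IsProbabilityMeasure (P.trim hG) :=
    ⟨by rw [trim_measurableSet_eq hG MeasurableSet.univ, measure_univ]⟩
  have : IsProbabilityMeasure (Q.trim hG) :=
    ⟨by rw [trim_measurableSet_eq hG MeasurableSet.univ, measure_univ]⟩
  refine isLogOptimal_of_ae_eq_rnDeriv (P.trim hG) (Q.trim hG) (hQP.trim hG)
    (ENNReal.measurable_ofReal.comp stronglyMeasurable_condExp.measurable) ?_
  filter_upwards [htrim, Measure.rnDeriv_ne_top (Q.trim hG) (P.trim hG)] with ω h ht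
  rw [← h, ENNReal.ofReal_toReal ht]
end
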